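/- (TW transformation on a tree.) Let V be a finite vertex type, T a simple graph on V that is a tree (connected and acyclic), with edge-weight function w : Sym2 V → ℝ, and let x, y, z be distinct vertices such that T.Adj x y, T.Adj y z, and w({x,y}) ≥ w({y,z}). Let T' be the graph obtained from T by deleting the edge {x,y} and adding the edge {x,z}, with weight function w' agreeing with w on all edges except that w'({x,z}) = w({x,y}). Then: (1) T' is a tree on V; and (2) for all vertices u and v, PathMax_{T'}(u,v) = PathMax_T(u,v), i.e., the maximum edge weight on the unique path in T' from u to v equals the maximum edge weight on the unique path in T from u to v. -/

import Mathlib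

/-- The maximum edge weight on a walk `p` (as the supremum of the weights of
its edges). -/
noncomputable def walkMax {V : Type*} {G : SimpleGraph V} (w : Sym2 V → ℝ)
    {u v : V} (p : G.Walk u v) : ℝ :=
  sSup (w '' {e | e ∈ p.edges})

/-- `pathMax G w u v` is the minimum, over all paths `P` from `u` to `v` in
`G`, of the maximum edge weight on `P`. -/
noncomputable def pathMax {V : Type*} (G : SimpleGraph V) (w : Sym2 V → ℝ)
    (u v : V) : ℝ :=
  sInf {m | ∃ p : G.Walk u v, p.IsPath ∧ m = walkMax w p}

/-- The subgraph of edges of weight at most `c`. -/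
def lightGraph {V : Type*} (G : SimpleGraph V) (w : Sym2 V → ℝ) (c : ℝ) : SimpleGraph V where
  Adj a b := G.Adj a b ∧ w s(a, b) ≤ c
  symm := ⟨fun a b h => ⟨h.1.symm, by rw [Sym2.eq_swap]; exact h.2⟩⟩
  loopless := ⟨fun a h => h.1.ne rfl⟩

theorem reachable_of_adj_reachable {V : Type*} {G H : SimpleGraph V}
    (h : ∀ a b, G.Adj a b → H.Reachable a b) {u v : V} (r : G.Reachable u v) :
    H.Reachable u v := by
  obtain ⟨p⟩ := r
  induction p with
  | nil => exact SimpleGraph.Reachable.refl _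
  | cons hadj _ ih => exact (h _ _ hadj).trans ih

theorem light_of_walk {V : Type*} {G : SimpleGraph V} {w : Sym2 V → ℝ} {c : ℝ} {u v : V}
    (p : G.Walk u v) (h : ∀ e ∈ p.edges, w e ≤ c) : (lightGraph G w c).Reachable u v := by
  induction p with
  | nil => exact SimpleGraph.Reachable.refl _
  | cons hadj q ih =>
    simp only [SimpleGraph.Walk.edges_cons, List.mem_cons, forall_eq_or_imp] at h
    have ha : (lightGraph G w c).Adj _ _ := ⟨hadj, h.1⟩
    exact ha.reachable.trans (ih h.2)

theorem walkMax_le_iff {V : Type*} {G : SimpleGraph V} {w : Sym2 V → ℝ} {c : ℝ} {u v : V}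
    (huv : u ≠ v) (p : G.Walk u v) : walkMax w p ≤ c ↔ ∀ e ∈ p.edges, w e ≤ c := by
  have hfin : (w '' {e | e ∈ p.edges}).Finite := (List.finite_toSet p.edges).image w
  have hne : (w '' {e | e ∈ p.edges}).Nonempty := by
    cases p with
    | nil => exact absurd rfl huv
    | cons h q => exact ⟨_, _, by simp only [SimpleGraph.Walk.edges_cons, Set.mem_setOf_eq]; exact List.mem_cons_self, rfl⟩
  unfold walkMax
  rw [csSup_le_iff hfin.bddAbove hne]
  simp

theorem pathMax_le_iff {V : Type*} [Fintype V] {G : SimpleGraph V} (hG : G.Connected)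
    {w : Sym2 V → ℝ} {c : ℝ} {u v : V} (huv : u ≠ v) :
    pathMax G w u v ≤ c ↔ (lightGraph G w c).Reachable u v := by
  classical
  have hne : {m | ∃ p : G.Walk u v, p.IsPath ∧ m = walkMax w p}.Nonempty := by
    obtain ⟨p, hp⟩ := (hG u v).exists_isPath
    exact ⟨_, p, hp, rfl⟩
  have hfin : {m | ∃ p : G.Walk u v, p.IsPath ∧ m = walkMax w p}.Finite := by
    have : (Set.range fun p : G.Path u v => walkMax w p.1).Finite := Set.finite_range _
    refine this.subset ?_
    rintro m ⟨p, hp, rfl⟩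
    exact ⟨⟨p, hp⟩, rfl⟩
  constructor
  · intro h
    obtain ⟨p, hp, hm⟩ := hne.csInf_mem hfin
    have h2 : walkMax w p ≤ c := by rw [← hm]; exact h
    exact light_of_walk p ((walkMax_le_iff huv p).1 h2)
  · intro h
    obtain ⟨p, hp⟩ := h.exists_isPath
    have hle : lightGraph G w c ≤ G := fun a b h => h.1
    refine (csInf_le hfin.bddBelow ⟨p.mapLe hle, ?_, rfl⟩).trans ?_
    · exact (SimpleGraph.Walk.isPath_mapLe hle).2 hp
    · rw [walkMax_le_iff huv]
      intro e he
      rw [SimpleGraph.Walk.edges_mapLe_eq_edges] at he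
      have := p.edges_subset_edgeSet he
      induction e with
      | h a b => exact this.2

theorem pathMax_self {V : Type*} (G : SimpleGraph V) (w : Sym2 V → ℝ) (u : V) :
    pathMax G w u u = 0 := by
  have : {m | ∃ p : G.Walk u u, p.IsPath ∧ m = walkMax w p} = {0} := by
    ext m
    simp only [Set.mem_setOf_eq, Set.mem_singleton_iff, SimpleGraph.Walk.isPath_iff_eq_nil,
      exists_eq_left]
    simp [walkMax]
  rw [pathMax, this, csInf_singleton]

/-- The TW transformation on a tree: if `T` is a tree with `T.Adj x y` and
`T.Adj y z` and `w {x,y} ≥ w {y,z}`, then replacing the edge `{x,y}` by the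
edge `{x,z}` (carrying the weight of `{x,y}`) yields again a tree, with the
same path-max queries. -/
theorem tw_transformation_tree {V : Type*} [Fintype V] (T : SimpleGraph V)
    (hTc : T.Connected) (hTa : T.IsAcyclic)
    (w w' : Sym2 V → ℝ) (x y z : V)
    (hxy : x ≠ y) (hyz : y ≠ z) (hxz : x ≠ z)
    (haxy : T.Adj x y) (hayz : T.Adj y z)
    (hwge : w s(x, y) ≥ w s(y, z))
    (hw'new : w' s(x, z) = w s(x, y))
    (hw'old : ∀ e : Sym2 V, e ≠ s(x, z) → w' e = w e) :
    (SimpleGraph.fromEdgeSet ((T.edgeSet \ {s(x, y)}) ∪ {s(x, z)})).Connected ∧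
    (SimpleGraph.fromEdgeSet ((T.edgeSet \ {s(x, y)}) ∪ {s(x, z)})).IsAcyclic ∧
    ∀ u v : V,
      pathMax (SimpleGraph.fromEdgeSet ((T.edgeSet \ {s(x, y)}) ∪ {s(x, z)})) w' u v =
        pathMax T w u v := by
  have hnxz : ¬ T.Adj x z := by
    intro h
    have h1 : (SimpleGraph.Walk.cons h SimpleGraph.Walk.nil).IsPath := by
      simp [hxz]
    have h2 : (SimpleGraph.Walk.cons haxy (SimpleGraph.Walk.cons hayz SimpleGraph.Walk.nil)).IsPath := by
      simp [hxz, hxy, hyz]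
    have := congrArg (fun p => p.1.length) (hTa.path_unique ⟨_, h1⟩ ⟨_, h2⟩)
    simp at this
  set T' := SimpleGraph.fromEdgeSet ((T.edgeSet \ {s(x, y)}) ∪ {s(x, z)}) with hT'
  have hadj : ∀ a b, T'.Adj a b ↔ (T.Adj a b ∧ s(a, b) ≠ s(x, y)) ∨ s(a, b) = s(x, z) := by
    intro a b
    rw [hT', SimpleGraph.fromEdgeSet_adj]
    constructor
    · rintro ⟨h | h, hab⟩
      · exact Or.inl h
      · exact Or.inr h
    · rintro (h | h)
      · exact ⟨Or.inl h, h.1.ne⟩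
      · refine ⟨Or.inr h, ?_⟩
        rintro rfl
        have : s(x, z).IsDiag := h ▸ (Sym2.mk_isDiag_iff.2 rfl)
        exact hxz (Sym2.mk_isDiag_iff.1 this)
  have hyz' : s(y, z) ≠ s(x, z) := by simp [hxy.symm, hyz]
  have hyz'' : s(y, z) ≠ s(x, y) := by simp [hxy.symm, hxz.symm]
  have hTxz : ∀ a b, T.Adj a b → s(a, b) ≠ s(x, z) := by
    intro a b h he
    rw [← SimpleGraph.mem_edgeSet, he] at h
    exact hnxz h
  have l1 : ∀ c a b, (lightGraph T w c).Adj a b → (lightGraph T' w' c).Reachable a b := by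
    rintro c a b ⟨h, hc⟩
    by_cases he : s(a, b) = s(x, y)
    · rw [he] at hc
      have e1 : (lightGraph T' w' c).Adj x z :=
        ⟨(hadj _ _).2 (Or.inr rfl), by rw [hw'new]; exact hc⟩
      have e2 : (lightGraph T' w' c).Adj y z :=
        ⟨(hadj _ _).2 (Or.inl ⟨hayz, hyz''⟩), by rw [hw'old _ hyz']; linarith⟩
      have r := e1.reachable.trans e2.symm.reachable
      rcases Sym2.eq_iff.1 he with ⟨rfl, rfl⟩ | ⟨rfl, rfl⟩
      · exact r
      · exact r.symm
    · have e : (lightGraph T' w' c).Adj a b :=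
        ⟨(hadj _ _).2 (Or.inl ⟨h, he⟩), by rw [hw'old _ (hTxz _ _ h)]; exact hc⟩
      exact e.reachable
  have l2 : ∀ c a b, (lightGraph T' w' c).Adj a b → (lightGraph T w c).Reachable a b := by
    rintro c a b ⟨h, hc⟩
    rcases (hadj _ _).1 h with h | he
    · rw [hw'old _ (hTxz _ _ h.1)] at hc
      have e : (lightGraph T w c).Adj a b := ⟨h.1, hc⟩
      exact e.reachable
    · rw [he, hw'new] at hc
      have e1 : (lightGraph T w c).Adj x y := ⟨haxy, hc⟩
      have e2 : (lightGraph T w c).Adj y z := ⟨hayz, by linarith⟩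
      have r := e1.reachable.trans e2.reachable
      rcases Sym2.eq_iff.1 he with ⟨rfl, rfl⟩ | ⟨rfl, rfl⟩
      · exact r
      · exact r.symm
  have hT'c : T'.Connected := by
    haveI := hTc.nonempty
    refine ⟨fun u v => ?_⟩
    refine reachable_of_adj_reachable (fun a b h => ?_) (hTc u v)
    have hle : lightGraph T' w' (w s(a, b)) ≤ T' := fun a b h => h.1
    exact (l1 (w s(a, b)) a b ⟨h, le_rfl⟩).mono hle
  refine ⟨hT'c, ?_, ?_⟩
  · have hT : T.IsTree := ⟨hTc, hTa⟩
    have hcard := (SimpleGraph.isTree_iff_connected_and_card.1 hT).2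
    refine (SimpleGraph.isTree_iff_connected_and_card.2 ⟨hT'c, ?_⟩).isAcyclic
    rw [← hcard]
    have hes : T'.edgeSet = insert s(x, z) (T.edgeSet \ {s(x, y)}) := by
      ext e
      induction e with
      | h a b =>
        rw [SimpleGraph.mem_edgeSet, hadj]
        simp only [Set.mem_insert_iff, Set.mem_sdiff, SimpleGraph.mem_edgeSet,
          Set.mem_singleton_iff]
        tauto
    have h := Set.ncard_exchange (s := T.edgeSet) (a := s(x, z)) (b := s(x, y)) hnxz haxy
    rw [← hes] at h
    rw [Nat.card_coe_set_eq, Nat.card_coe_set_eq, h]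
  · intro u v
    by_cases huv : u = v
    · subst huv
      rw [pathMax_self, pathMax_self]
    · refine eq_of_forall_ge_iff fun c => ?_
      rw [pathMax_le_iff hT'c huv, pathMax_le_iff hTc huv]
      exact ⟨reachable_of_adj_reachable (l2 c), reachable_of_adj_reachable (l1 c)⟩
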